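/- Let Theta in {0,1}^{n x K} be a membership matrix (each row has exactly one 1) whose community sizes n_1, ..., n_K satisfy n_k >= c*n/K for all k, for a constant c > 0. Let B_{1,0}, ..., B_{L,0} in [0,1]^{K x K} be symmetric matrices such that the minimum eigenvalue of sum_{l=1}^L B_{l,0}^2 is at least c*L. Let rho > 0, P_l := rho*Theta*B_{l,0}*Theta^T, and Pi := (1/(L*n))*sum_{l=1}^L P_l^2. Then the K-th largest eigenvalue of Pi satisfies sigma_K(Pi) >= (c^3/K^2)*n*rho^2. -/

import Mathlib

open Matrix

/-!
Put `G = Θᵀ Θ`, so that `P_l ^ 2 = ρ ^ 2 Θ B_l G B_l Θᵀ`. In the Loewner order, a bound `m ≤ G`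
and a gap `γ ≤ ∑ B_l ^ 2` give `∑ P_l ^ 2 ≥ ρ ^ 2 m γ Θ Θᵀ`. The subspace is the range of `Θ`: it
has dimension `K` because `G` is invertible, and there `Θ Θᵀ ≥ m` because `Θ Θᵀ` and `G` share their
nonzero spectrum. For a membership matrix, `G` is the diagonal matrix of community sizes.
-/

section GramBound

variable {ι κ ι' κ' Λ : Type*} [Fintype ι] [Fintype κ] [Fintype ι'] [Fintype κ'] [Fintype Λ]

/-- `m` is a lower bound of the Gram matrix `Aᵀ * A` in the Loewner order; for `0 ≤ m` this says
that all singular values of `A`, as a map out of `κ → ℝ`, are at least `√m`. -/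
def GramBoundedBelow (A : Matrix ι κ ℝ) (m : ℝ) : Prop :=
  ∀ y : κ → ℝ, m * (y ⬝ᵥ y) ≤ A *ᵥ y ⬝ᵥ A *ᵥ y

theorem dotProduct_self_eq_sum_sq {R : Type*} [Semiring R] (x : ι → R) : x ⬝ᵥ x = ∑ i, x i ^ 2 := by
  simp only [dotProduct, sq]

theorem dotProduct_sum_gram_mulVec {R : Type*} [CommSemiring R]
    (A : Λ → Matrix ι κ R) (x : κ → R) :
    x ⬝ᵥ (∑ l, (A l)ᵀ * A l) *ᵥ x = ∑ l, A l *ᵥ x ⬝ᵥ A l *ᵥ x := by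
  simp only [sum_mulVec, dotProduct_sum, ← mulVec_mulVec, dotProduct_mulVec, vecMul_transpose]

namespace GramBoundedBelow

variable {A : Matrix ι κ ℝ} {m : ℝ}

theorem mulVec_injective (hA : GramBoundedBelow A m) (hm : 0 < m) :
    Function.Injective A.mulVecLin := by
  refine (injective_iff_map_eq_zero A.mulVecLin).mpr fun y hy => ?_
  have hAy : A *ᵥ y = 0 := hy
  have hle : m * (y ⬝ᵥ y) ≤ 0 := by simpa only [hAy, dotProduct_zero] using hA y
  have hnonneg : 0 ≤ y ⬝ᵥ y := dotProduct_self_star_nonneg y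
  exact dotProduct_self_eq_zero.mp (le_antisymm (nonpos_of_mul_nonpos_right hle hm) hnonneg)

theorem finrank_range (hA : GramBoundedBelow A m) (hm : 0 < m) :
    Module.finrank ℝ (LinearMap.range A.mulVecLin) = Fintype.card κ := by
  rw [LinearMap.finrank_range_of_inj (hA.mulVec_injective hm), Module.finrank_fintype_fun_eq_card]

theorem le_transpose_mulVec (hA : GramBoundedBelow A m) (hm : 0 ≤ m)
    {x : ι → ℝ} (hx : x ∈ LinearMap.range A.mulVecLin) :
    m * (x ⬝ᵥ x) ≤ Aᵀ *ᵥ x ⬝ᵥ Aᵀ *ᵥ x := by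
  obtain ⟨y, rfl : A *ᵥ y = x⟩ := hx
  set z := Aᵀ *ᵥ A *ᵥ y with hz
  have hzy : z ⬝ᵥ y = A *ᵥ y ⬝ᵥ A *ᵥ y := by
    rw [hz, mulVec_transpose, ← dotProduct_mulVec]
  have hexpand : (z - m • y) ⬝ᵥ (z - m • y) =
      z ⬝ᵥ z - 2 * m * (A *ᵥ y ⬝ᵥ A *ᵥ y) + m * (m * (y ⬝ᵥ y)) := by
    simp only [sub_dotProduct, dotProduct_sub, smul_dotProduct, dotProduct_smul, smul_eq_mul,
      dotProduct_comm y z, hzy]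
    ring
  have hnonneg : 0 ≤ (z - m • y) ⬝ᵥ (z - m • y) := dotProduct_self_star_nonneg _
  linarith [mul_le_mul_of_nonneg_left (hA y) hm]

theorem le_dotProduct_sum_gram_mulVec (hA : GramBoundedBelow A m) (hm : 0 ≤ m)
    (B : Λ → Matrix κ κ' ℝ) {γ : ℝ}
    (hgap : ∀ w : κ' → ℝ, γ * (w ⬝ᵥ w) ≤ w ⬝ᵥ (∑ l, (B l)ᵀ * B l) *ᵥ w)
    (C : Matrix κ' ι' ℝ) (x : ι' → ℝ) :
    m * (γ * (C *ᵥ x ⬝ᵥ C *ᵥ x)) ≤ x ⬝ᵥ (∑ l, (A * B l * C)ᵀ * (A * B l * C)) *ᵥ x := by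
  set w := C *ᵥ x
  calc m * (γ * (w ⬝ᵥ w))
      ≤ m * ∑ l, B l *ᵥ w ⬝ᵥ B l *ᵥ w :=
        mul_le_mul_of_nonneg_left ((hgap w).trans_eq (dotProduct_sum_gram_mulVec B w)) hm
    _ ≤ ∑ l, A *ᵥ B l *ᵥ w ⬝ᵥ A *ᵥ B l *ᵥ w := by
        rw [Finset.mul_sum]
        exact Finset.sum_le_sum fun l _ => hA (B l *ᵥ w)
    _ = x ⬝ᵥ (∑ l, (A * B l * C)ᵀ * (A * B l * C)) *ᵥ x := by
        simp only [dotProduct_sum_gram_mulVec, ← mulVec_mulVec, w]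

theorem of_membership [DecidableEq κ] {g : ι → κ}
    (hmem : ∀ i k, A i k = if g i = k then 1 else 0)
    (hsize : ∀ k, m ≤ (Finset.univ.filter fun i => g i = k).card) :
    GramBoundedBelow A m := by
  intro y
  have hmulVec : A *ᵥ y = y ∘ g := by
    ext i
    simp [mulVec, dotProduct, hmem]
  calc m * (y ⬝ᵥ y)
      = ∑ k, m * y k ^ 2 := by rw [dotProduct_self_eq_sum_sq, Finset.mul_sum]
    _ ≤ ∑ k, ((Finset.univ.filter fun i => g i = k).card : ℝ) * y k ^ 2 :=
        Finset.sum_le_sum fun k _ => mul_le_mul_of_nonneg_right (hsize k) (sq_nonneg _)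
    _ = ∑ k, ∑ i with g i = k, y k ^ 2 := by simp only [Finset.sum_const, nsmul_eq_mul]
    _ = ∑ i, y (g i) ^ 2 := Finset.sum_fiberwise' _ _ _
    _ = A *ᵥ y ⬝ᵥ A *ᵥ y := by rw [hmulVec, dotProduct_self_eq_sum_sq]; rfl

end GramBoundedBelow

theorem stmt_17_general [Nonempty ι] [Nonempty Λ] {δ γ : ℝ} (hδ : 0 < δ) (hγ : 0 ≤ γ)
    {Θ : Matrix ι κ ℝ} (hΘ : GramBoundedBelow Θ (δ * Fintype.card ι))
    {B : Λ → Matrix κ κ ℝ} (hB : ∀ l, (B l).IsSymm)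
    (hgap : ∀ w : κ → ℝ, γ * Fintype.card Λ * (w ⬝ᵥ w) ≤ w ⬝ᵥ (∑ l, B l * B l) *ᵥ w)
    {ρ : ℝ} {P : Λ → Matrix ι ι ℝ} (hP : ∀ l, P l = ρ • (Θ * B l * Θᵀ)) :
    ∃ V : Submodule ℝ (ι → ℝ), Module.finrank ℝ V = Fintype.card κ ∧ ∀ x ∈ V,
      δ ^ 2 * γ * Fintype.card ι * ρ ^ 2 * (x ⬝ᵥ x) ≤
        x ⬝ᵥ (((Fintype.card Λ : ℝ) * Fintype.card ι)⁻¹ • ∑ l, P l * P l) *ᵥ x := by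
  set n : ℝ := (Fintype.card ι : ℝ)
  set L : ℝ := (Fintype.card Λ : ℝ)
  have hn : 0 < n := Nat.cast_pos.mpr Fintype.card_pos
  have hL : 0 < L := Nat.cast_pos.mpr Fintype.card_pos
  have hm : 0 < δ * n := mul_pos hδ hn
  have hgap' : ∀ w : κ → ℝ, γ * L * (w ⬝ᵥ w) ≤ w ⬝ᵥ (∑ l, (B l)ᵀ * B l) *ᵥ w := by
    simpa only [(hB _).eq] using hgap
  have hgram : ∑ l, P l * P l = ρ ^ 2 • ∑ l, (Θ * B l * Θᵀ)ᵀ * (Θ * B l * Θᵀ) := by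
    simp only [hP, transpose_mul, transpose_transpose, (hB _).eq, smul_mul_smul_comm,
      Finset.smul_sum, sq, Matrix.mul_assoc]
  refine ⟨LinearMap.range Θ.mulVecLin, hΘ.finrank_range hm, fun x hx => ?_⟩
  calc δ ^ 2 * γ * n * ρ ^ 2 * (x ⬝ᵥ x)
      = (L * n)⁻¹ * (ρ ^ 2 * (δ * n * (γ * L * (δ * n * (x ⬝ᵥ x))))) := by field_simp
    _ ≤ (L * n)⁻¹ * (ρ ^ 2 * (δ * n * (γ * L * (Θᵀ *ᵥ x ⬝ᵥ Θᵀ *ᵥ x)))) := by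
        gcongr
        exact hΘ.le_transpose_mulVec hm.le hx
    _ ≤ (L * n)⁻¹ * (ρ ^ 2 * (x ⬝ᵥ (∑ l, (Θ * B l * Θᵀ)ᵀ * (Θ * B l * Θᵀ)) *ᵥ x)) := by
        gcongr
        exact hΘ.le_dotProduct_sum_gram_mulVec hm.le B hgap' Θᵀ x
    _ = x ⬝ᵥ ((L * n)⁻¹ • ∑ l, P l * P l) *ᵥ x := by
        simp only [hgram, smul_mulVec, dotProduct_smul, smul_eq_mul]

end GramBound

/-- lower bound on the `K`-th largest eigenvalue of the population matrix `Π`,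
stated via the Courant–Fischer characterization: there is a `K`-dimensional subspace on which
the quadratic form of `Π` is at least `(c^3/K^2) * n * ρ^2` times the squared norm. -/
theorem stmt_17 {n K L : ℕ} (hn : 0 < n) (hK : 0 < K) (hL : 0 < L)
    (c : ℝ) (hc : 0 < c)
    (g : Fin n → Fin K)
    (Θ : Matrix (Fin n) (Fin K) ℝ)
    (hΘ : ∀ i k, Θ i k = if g i = k then 1 else 0)
    (hbal : ∀ k : Fin K, c * n / K ≤ (Finset.univ.filter (fun i => g i = k)).card)
    (B0 : Fin L → Matrix (Fin K) (Fin K) ℝ)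
    (hB0sym : ∀ l, (B0 l)ᵀ = B0 l)
    (hB0range : ∀ l a b, B0 l a b ∈ Set.Icc (0 : ℝ) 1)
    (hgap : ∀ x : Fin K → ℝ,
      c * L * (∑ a, x a ^ 2) ≤ x ⬝ᵥ (∑ l, B0 l * B0 l).mulVec x)
    (ρ : ℝ) (hρ : 0 < ρ)
    (P : Fin L → Matrix (Fin n) (Fin n) ℝ)
    (hP : ∀ l, P l = ρ • (Θ * B0 l * Θᵀ))
    (Pi : Matrix (Fin n) (Fin n) ℝ)
    (hPi : Pi = ((L : ℝ) * n)⁻¹ • ∑ l, P l * P l) :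
    ∃ V : Submodule ℝ (Fin n → ℝ), Module.finrank ℝ V = K ∧
      ∀ x ∈ V, (c ^ 3 / K ^ 2) * n * ρ ^ 2 * (∑ i, x i ^ 2) ≤ x ⬝ᵥ Pi.mulVec x := by
  have : NeZero n := ⟨hn.ne'⟩
  have : NeZero L := ⟨hL.ne'⟩
  have hgram : GramBoundedBelow Θ (c / K * Fintype.card (Fin n)) :=
    .of_membership hΘ fun k => by simpa only [Fintype.card_fin, div_mul_eq_mul_div] using hbal k
  have hconst : c ^ 3 / (K : ℝ) ^ 2 = (c / K) ^ 2 * c := by ring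
  simpa only [hPi, hconst, dotProduct_self_eq_sum_sq, Fintype.card_fin] using
    stmt_17_general (by positivity) hc.le hgram hB0sym
      (by simpa only [dotProduct_self_eq_sum_sq, Fintype.card_fin] using hgap) hP
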